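/- arXiv:2206.04842 — 3 statements merged into one kernel-verified Lean document; each statement's English description precedes it below -/
import Mathlib

section
/- For all integers d ≥ 31 and all integers n with d + 2 ≤ n ≤ 5d, one has q_d^{(1)}(n) ≥ Q_{d−3}^{(1,-)}(n). -/
/-- `q_d^{(a)}(n)`: the number of partitions of `n` into parts of size at least `a`
such that successive parts differ by at least `d`. -/
noncomputable def gapCount (d a n : ℕ) : ℕ :=
  Nat.card {p : n.Partition //
    (∀ x ∈ p.parts, a ≤ x) ∧
    List.Chain' (fun x y => x + d ≤ y) (p.parts.sort (· ≤ ·))}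

/-- `Q_d^{(a)}(n)`: the number of partitions of `n` into parts congruent to `a` or `-a`
modulo `d + 3`. -/
noncomputable def congCount (d a n : ℕ) : ℕ :=
  Nat.card {p : n.Partition //
    ∀ x ∈ p.parts, x ≡ a [MOD d + 3] ∨ x + a ≡ 0 [MOD d + 3]}

/-- `Q_d^{(a,-)}(n)`: as `congCount`, but no part equals `d + 3 - a`. -/
noncomputable def congMinusCount (d a n : ℕ) : ℕ :=
  Nat.card {p : n.Partition //
    (∀ x ∈ p.parts, x ≡ a [MOD d + 3] ∨ x + a ≡ 0 [MOD d + 3]) ∧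
    ∀ x ∈ p.parts, x ≠ d + 3 - a}

/-- `Q_d^{(a,-,-)}(n)`: as `congCount`, but no part equals `a` or `d + 3 - a`. -/
noncomputable def congMinusMinusCount (d a n : ℕ) : ℕ :=
  Nat.card {p : n.Partition //
    (∀ x ∈ p.parts, x ≡ a [MOD d + 3] ∨ x + a ≡ 0 [MOD d + 3]) ∧
    (∀ x ∈ p.parts, x ≠ a) ∧ ∀ x ∈ p.parts, x ≠ d + 3 - a}

/-- `ρ(R; n)`: the number of partitions of `n` all of whose parts lie in `R`. -/
noncomputable def rhoCount (R : Set ℕ) (n : ℕ) : ℕ :=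
  Nat.card {p : n.Partition // ∀ x ∈ p.parts, x ∈ R}

/-- `h_n^{(a)}`: the least nonnegative residue of `-n` modulo `a`,
so that `n + negRes n a = a * ⌈n/a⌉`. -/
def negRes (n a : ℕ) : ℕ := (a - n % a) % a

/-- `⌈d/a⌉` for natural numbers. -/
def cdiv (d a : ℕ) : ℕ := (d + a - 1) / a

/-- The multiplicities in `m` of the integers `x ≡ ±1 (mod d)` with `d - 1 < x ≤ 5 * d`. -/
def bigCounts (d : ℕ) (m : Multiset ℕ) : ℕ × ℕ × ℕ × ℕ × ℕ × ℕ × ℕ × ℕ :=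
  (m.count (d + 1), m.count (2 * d - 1), m.count (2 * d + 1), m.count (3 * d - 1),
    m.count (3 * d + 1), m.count (4 * d - 1), m.count (4 * d + 1), m.count (5 * d - 1))

/-- Vectors of multiplicities of weight at most `w`, where a part `k * d ± 1` has weight `k`;
in weight `5` the parts `k * d + 1` may not outnumber the parts `k * d - 1`. -/
def weightBounded (w : ℕ) : Finset (ℕ × ℕ × ℕ × ℕ × ℕ × ℕ × ℕ × ℕ) :=
  (Finset.range 6 ×ˢ Finset.range 3 ×ˢ Finset.range 3 ×ˢ Finset.range 2 ×ˢ Finset.range 2 ×ˢ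
    Finset.range 2 ×ˢ Finset.range 2 ×ˢ Finset.range 2).filter
    fun (a, b, c, e, f, g, h, i) =>
      a + 2 * b + 2 * c + 3 * e + 3 * f + 4 * g + 4 * h + 5 * i ≤ w ∧
      (a + 2 * b + 2 * c + 3 * e + 3 * f + 4 * g + 4 * h + 5 * i = 5 →
        a + c + f + h ≤ b + e + g + i)

theorem card_weightBounded_one : (weightBounded 1).card = 2 := by decide +kernel

theorem card_weightBounded_two : (weightBounded 2).card = 5 := by decide +kernel

theorem card_weightBounded_five : (weightBounded 5).card = 26 := by decide +kernel

theorem mem_of_congr_one_or_neg_one {d x : ℕ} (hd : 2 ≤ d) (hx : x ≤ 5 * d)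
    (h : x ≡ 1 [MOD d] ∨ x + 1 ≡ 0 [MOD d]) (hne : x ≠ d - 1) :
    x ∈ ({1, d + 1, 2 * d - 1, 2 * d + 1, 3 * d - 1, 3 * d + 1, 4 * d - 1, 4 * d + 1,
      5 * d - 1} : Finset ℕ) := by
  simp only [Finset.mem_insert, Finset.mem_singleton]
  rcases h with h | h
  · have hx1 : 1 ≤ x := by
      by_contra hx0
      obtain rfl : x = 0 := by omega
      have := Nat.le_of_dvd one_pos ((Nat.modEq_zero_iff_dvd).1 h.symm)
      omega
    obtain ⟨k, hk⟩ := (Nat.modEq_iff_dvd' hx1).1 h.symm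
    have hk5 : k < 5 := by
      by_contra hk5
      have := Nat.mul_le_mul_left d (not_lt.1 hk5)
      omega
    interval_cases k <;> omega
  · obtain ⟨k, hk⟩ := (Nat.modEq_zero_iff_dvd).1 h
    have hk5 : k < 6 := by
      by_contra hk5
      have := Nat.mul_le_mul_left d (not_lt.1 hk5)
      omega
    interval_cases k <;> omega

theorem sum_eq_of_parts_subset {d : ℕ} (hd : 3 ≤ d) {m : Multiset ℕ}
    (hm : m.toFinset ⊆ {1, d + 1, 2 * d - 1, 2 * d + 1, 3 * d - 1, 3 * d + 1, 4 * d - 1,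
      4 * d + 1, 5 * d - 1}) :
    m.sum = m.count 1 + (m.count (d + 1) * (d + 1) + (m.count (2 * d - 1) * (2 * d - 1) +
      (m.count (2 * d + 1) * (2 * d + 1) + (m.count (3 * d - 1) * (3 * d - 1) +
      (m.count (3 * d + 1) * (3 * d + 1) + (m.count (4 * d - 1) * (4 * d - 1) +
      (m.count (4 * d + 1) * (4 * d + 1) + m.count (5 * d - 1) * (5 * d - 1)))))))) := by
  rw [Finset.sum_multiset_count_of_subset m _ hm]
  repeat rw [Finset.sum_insert (by simp only [Finset.mem_insert, Finset.mem_singleton]; omega)]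
  rw [Finset.sum_singleton]
  simp only [smul_eq_mul, mul_one]

theorem mem_weightBounded {d n w a b c e f g h i : ℕ} (hd : 4 ≤ d) (hw : w ≤ 5)
    (hn : n ≤ 5 * d) (hnw : 2 * n + (w + 1) < 2 * ((w + 1) * d))
    (hsum : a * (d + 1) + (b * (2 * d - 1) + (c * (2 * d + 1) + (e * (3 * d - 1) +
      (f * (3 * d + 1) + (g * (4 * d - 1) + (h * (4 * d + 1) + i * (5 * d - 1))))))) ≤ n) :
    (a, b, c, e, f, g, h, i) ∈ weightBounded w := by
  have hlin : (a + 2 * b + 2 * c + 3 * e + 3 * f + 4 * g + 4 * h + 5 * i) * d +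
      (a + c + f + h) ≤ n + (b + e + g + i) := by
    zify [show 1 ≤ 2 * d by omega, show 1 ≤ 3 * d by omega, show 1 ≤ 4 * d by omega,
      show 1 ≤ 5 * d by omega] at hsum ⊢
    linarith
  have hweight : a + 2 * b + 2 * c + 3 * e + 3 * f + 4 * g + 4 * h + 5 * i ≤ w := by
    by_contra hlt
    obtain ⟨k, hk⟩ := Nat.exists_eq_add_of_lt (not_le.1 hlt)
    have hneg : 2 * (b + e + g + i) ≤ w + k + 1 := by omega
    have hkd : k ≤ k * d := Nat.le_mul_of_pos_right k (by omega)
    rw [hk, show (w + k + 1) * d = (w + 1) * d + k * d by ring] at hlin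
    omega
  have hbal : a + 2 * b + 2 * c + 3 * e + 3 * f + 4 * g + 4 * h + 5 * i = 5 →
      a + c + f + h ≤ b + e + g + i := by
    intro h5
    rw [h5] at hlin
    omega
  simp only [weightBounded, Finset.mem_filter, Finset.mem_product, Finset.mem_range]
  refine ⟨?_, hweight, hbal⟩
  omega

theorem congMinusCount_le_card {d n w : ℕ} (hd : 4 ≤ d) (hw : w ≤ 5) (hn : n ≤ 5 * d)
    (hnw : 2 * n + (w + 1) < 2 * ((w + 1) * d)) :
    congMinusCount (d - 3) 1 n ≤ (weightBounded w).card := by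
  have hd3 : d - 3 + 3 = d := by omega
  unfold congMinusCount
  rw [hd3, ← Nat.card_eq_finsetCard]
  have hsub : ∀ p : {p : n.Partition // (∀ x ∈ p.parts, x ≡ 1 [MOD d] ∨ x + 1 ≡ 0 [MOD d]) ∧
      ∀ x ∈ p.parts, x ≠ d - 1}, p.1.parts.toFinset ⊆ {1, d + 1, 2 * d - 1, 2 * d + 1,
      3 * d - 1, 3 * d + 1, 4 * d - 1, 4 * d + 1, 5 * d - 1} := by
    rintro ⟨p, hp, hp'⟩ x hx
    rw [Multiset.mem_toFinset] at hx
    exact mem_of_congr_one_or_neg_one (by omega)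
      (((Multiset.le_sum_of_mem hx).trans_eq p.parts_sum).trans hn) (hp x hx) (hp' x hx)
  have hsum := fun p => (sum_eq_of_parts_subset (by omega) (hsub p)).symm.trans p.1.parts_sum
  refine Nat.card_le_card_of_injective
    (fun p => (⟨bigCounts d p.1.parts, mem_weightBounded hd hw hn hnw
      ((Nat.le_add_left _ _).trans_eq (hsum p))⟩ : weightBounded w)) ?_
  intro p q hpq
  simp only [Subtype.mk.injEq, bigCounts, Prod.mk.injEq] at hpq
  obtain ⟨h₁, h₂, h₃, h₄, h₅, h₆, h₇, h₈⟩ := hpq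
  have hone : p.1.parts.count 1 = q.1.parts.count 1 := by
    have := (hsum p).trans (hsum q).symm
    rw [h₁, h₂, h₃, h₄, h₅, h₆, h₇, h₈] at this
    exact Nat.add_right_cancel this
  refine Subtype.ext (Nat.Partition.ext (Multiset.ext.2 fun x => ?_))
  by_cases hx : x ∈ ({1, d + 1, 2 * d - 1, 2 * d + 1, 3 * d - 1, 3 * d + 1, 4 * d - 1,
      4 * d + 1, 5 * d - 1} : Finset ℕ)
  · simp only [Finset.mem_insert, Finset.mem_singleton] at hx
    rcases hx with rfl | rfl | rfl | rfl | rfl | rfl | rfl | rfl | rfl <;> assumption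
  · rw [Multiset.count_eq_zero_of_notMem fun h => hx (hsub p (Multiset.mem_toFinset.2 h)),
      Multiset.count_eq_zero_of_notMem fun h => hx (hsub q (Multiset.mem_toFinset.2 h))]

/-- The partition of `n` into `i` and `n - i`, or into `n` alone if `i = 0`. -/
def pairPartition {n i : ℕ} (hi : i ≤ n) : n.Partition :=
  Nat.Partition.ofSums n {i, n - i} (by simp; omega)

theorem pairPartition_parts {n i : ℕ} (hi : i ≤ n) (h0 : i ≠ 0) (hn : n - i ≠ 0) :
    (pairPartition hi).parts = {i, n - i} := by
  change Multiset.filter (· ≠ 0) ({i, n - i} : Multiset ℕ) = _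
  rw [Multiset.filter_eq_self]
  simp [h0, hn]

theorem pairPartition_zero_parts {n : ℕ} (hn : n ≠ 0) :
    (pairPartition (Nat.zero_le n)).parts = {n} := by
  change Multiset.filter (· ≠ 0) ({0, n} : Multiset ℕ) = _
  rw [Multiset.insert_eq_cons, Multiset.filter_cons_of_neg _ (by simp), Multiset.filter_eq_self]
  simpa using hn

theorem pairPartition_injective {n i j : ℕ} (hi : 2 * i < n) (hj : 2 * j < n)
    (h : pairPartition (show i ≤ n by omega) = pairPartition (show j ≤ n by omega)) : i = j := by
  have key : ∀ {i j : ℕ} (hi : 2 * i < n) (hj : 2 * j < n), i ≠ 0 →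
      pairPartition (show i ≤ n by omega) = pairPartition (show j ≤ n by omega) → i = j := by
    intro i j hi hj h0 h
    have hmem : i ∈ (pairPartition (show j ≤ n by omega)).parts := by
      rw [← h, pairPartition_parts _ h0 (by omega)]
      simp
    have : i ∈ ({j, n - j} : Multiset ℕ) := Multiset.mem_of_mem_filter hmem
    simp only [Multiset.insert_eq_cons, Multiset.mem_cons, Multiset.mem_singleton] at this
    omega
  by_cases h0 : i = 0
  · by_cases h0' : j = 0
    · omega
    · exact (key hj hi h0' h.symm).symm
  · exact key hi hj h0 h

theorem le_gapCount {d n : ℕ} (hd : 1 ≤ d) (hn : d ≤ n) :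
    (n - d) / 2 + 1 ≤ gapCount d 1 n := by
  unfold gapCount
  rw [← Nat.card_fin ((n - d) / 2 + 1)]
  refine Nat.card_le_card_of_injective
    (fun i => ⟨pairPartition (show (i : ℕ) ≤ n by omega),
      fun x hx => (pairPartition _).parts_pos hx, ?_⟩) ?_
  · obtain ⟨i, hi⟩ := i
    by_cases h0 : i = 0
    · subst h0
      simp only [pairPartition_zero_parts (show n ≠ 0 by omega), Multiset.sort_singleton]
      exact List.isChain_singleton _
    · simp only [pairPartition_parts (show i ≤ n by omega) h0 (by omega)]
      rw [Multiset.insert_eq_cons, Multiset.sort_cons, Multiset.sort_singleton]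
      · exact List.isChain_pair.2 (by omega)
      · simp only [Multiset.mem_singleton, forall_eq]
        omega
  · intro i j hij
    exact Fin.ext (pairPartition_injective (by omega) (by omega) (Subtype.ext_iff.1 hij))

theorem stmt8 (d n : ℕ) (hd : 31 ≤ d) (hn1 : d + 2 ≤ n) (hn2 : n ≤ 5 * d) :
    congMinusCount (d - 3) 1 n ≤ gapCount d 1 n := by
  refine le_trans ?_ (le_gapCount (by omega) (by omega))
  by_cases h1 : n + 2 ≤ 2 * d
  · have := congMinusCount_le_card (w := 1) (by omega) (by omega) hn2 (by omega)
    rw [card_weightBounded_one] at this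
    omega
  by_cases h2 : n + 2 ≤ 3 * d
  · have := congMinusCount_le_card (w := 2) (by omega) (by omega) hn2 (by omega)
    rw [card_weightBounded_two] at this
    omega
  · have := congMinusCount_le_card (w := 5) (by omega) le_rfl hn2 (by omega)
    rw [card_weightBounded_five] at this
    omega
end

section
/- For all integers d with d = 31 or d ≥ 63, and all integers n ≥ 4d + 2^{r_d}, one has q_d^{(1)}(n) ≥ Q_{d−3}^{(1,-)}(n). -/
open Finset

/-- The coefficient at `N` of `F(x) / (1 - x ^ j)`, where `F(x) = ∑ f(N) x ^ N`: the effect of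
allowing an additional part of size `j`. -/
def addPart (j : ℕ) (f : ℕ → ℕ) (N : ℕ) : ℕ :=
  ∑ i ∈ range (N / j + 1), f (N - i * j)

theorem addPart_of_lt {j N : ℕ} (f : ℕ → ℕ) (h : N < j) : addPart j f N = f N := by
  simp [addPart, Nat.div_eq_of_lt h]

theorem addPart_of_le {j N : ℕ} (f : ℕ → ℕ) (hj : 0 < j) (h : j ≤ N) :
    addPart j f N = f N + addPart j f (N - j) := by
  have hdiv : N / j = (N - j) / j + 1 := Nat.div_eq_sub_div hj h
  rw [addPart, hdiv, sum_range_succ', addPart, add_comm]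
  congr 1
  · simp
  · refine sum_congr rfl fun i _ => ?_
    congr 1
    rw [Nat.sub_sub]
    ring_nf

theorem le_addPart (j : ℕ) (f : ℕ → ℕ) (N : ℕ) : f N ≤ addPart j f N := by
  rw [addPart, sum_range_succ']
  simp

theorem addPart_mono {f : ℕ → ℕ} (hf : Monotone f) (j : ℕ) : Monotone (addPart j f) := by
  intro a b hab
  refine (sum_le_sum fun i _ => hf (Nat.sub_le_sub_right hab _)).trans ?_
  exact sum_le_sum_of_subset (range_subset_range.2 (by gcongr))

/-- The number of families of nonnegative multiplicities of the parts `1, …, J`, each part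
occurring in two colours, with total size at most `N`. -/
def pairCount : ℕ → ℕ → ℕ
  | 0 => fun _ => 1
  | J + 1 => addPart (J + 1) (addPart (J + 1) (pairCount J))

theorem pairCount_mono (J : ℕ) : Monotone (pairCount J) := by
  induction J with
  | zero => exact monotone_const
  | succ J ih => exact addPart_mono (addPart_mono ih _) _

/-! ### An upper bound for partitions into parts congruent to `±1` -/

theorem exists_cover_insert {D j p : ℕ} {S : Set ℕ} {f : ℕ → ℕ} (hj : 0 < j) (hD : 0 < D)
    (hp : D * j ≤ p) (hf : Monotone f)
    (h : ∀ n, ∃ F : Finset (Multiset ℕ), F.card ≤ f (n / D) ∧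
      ∀ m : Multiset ℕ, (∀ x ∈ m, x ∈ S) → m.sum ≤ n → m ∈ F) (n : ℕ) :
    ∃ F : Finset (Multiset ℕ), F.card ≤ addPart j f (n / D) ∧
      ∀ m : Multiset ℕ, (∀ x ∈ m, x ∈ insert p S) → m.sum ≤ n → m ∈ F := by
  have hp0 : 0 < p := (Nat.mul_pos hD hj).trans_le hp
  induction n using Nat.strong_induction_on with
  | _ n ih =>
    obtain ⟨F₁, hF₁, hm₁⟩ := h n
    by_cases hpn : p ≤ n
    · obtain ⟨F₂, hF₂, hm₂⟩ := ih (n - p) (by omega)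
      refine ⟨F₁ ∪ F₂.image (p ::ₘ ·), ?_, fun m hm hs => ?_⟩
      · have hjn : j ≤ n / D := by
          rw [Nat.le_div_iff_mul_le hD, mul_comm]
          exact hp.trans hpn
        have hsub : (n - p) / D ≤ n / D - j := by
          rw [← Nat.sub_mul_div]
          exact Nat.div_le_div_right (by rw [mul_comm] at hp; rw [mul_comm]; omega)
        rw [addPart_of_le f hj hjn]
        calc (F₁ ∪ F₂.image (p ::ₘ ·)).card ≤ F₁.card + (F₂.image (p ::ₘ ·)).card :=
              card_union_le _ _
          _ ≤ f (n / D) + addPart j f (n / D - j) := by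
              gcongr
              exact (card_image_le.trans hF₂).trans (addPart_mono hf j hsub)
      · rw [mem_union, mem_image]
        by_cases hpm : p ∈ m
        · obtain ⟨m', rfl⟩ := Multiset.exists_cons_of_mem hpm
          rw [Multiset.sum_cons] at hs
          exact .inr ⟨m', hm₂ m' (fun x hx => hm x (Multiset.mem_cons_of_mem hx)) (by omega), rfl⟩
        · exact .inl (hm₁ m (fun x hx =>
            (hm x hx).resolve_left fun hxp => hpm (hxp ▸ hx)) hs)
    · refine ⟨F₁, hF₁.trans (le_addPart _ _ _), fun m hm hs => hm₁ m (fun x hx => ?_) hs⟩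
      refine (hm x hx).resolve_left fun hxp => hpn ?_
      exact hxp ▸ (Multiset.le_sum_of_mem hx).trans hs

theorem exists_cover (d J n : ℕ) (hd : 2 ≤ d) :
    ∃ F : Finset (Multiset ℕ), F.card ≤ pairCount J (n / (d - 1)) ∧
      ∀ m : Multiset ℕ, (∀ x ∈ m, ∃ j, 0 < j ∧ j ≤ J ∧ (x = d * j + 1 ∨ x + 1 = d * j)) →
        m.sum ≤ n → m ∈ F := by
  induction J generalizing n with
  | zero =>
    refine ⟨{0}, by simp [pairCount], fun m hm _ => ?_⟩
    rw [mem_singleton, Multiset.eq_zero_iff_forall_notMem]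
    intro x hx
    obtain ⟨j, h0, h1, -⟩ := hm x hx
    omega
  | succ J ih =>
    obtain ⟨e, rfl⟩ : ∃ e, d = e + 1 := ⟨d - 1, by omega⟩
    have hexp : (e + 1) * (J + 1) = e * (J + 1) + J + 1 := by ring
    simp only [Nat.add_sub_cancel] at ih ⊢
    have step₁ := exists_cover_insert (p := (e + 1) * (J + 1) - 1) (D := e)
      (S := {x | ∃ j, 0 < j ∧ j ≤ J ∧ (x = (e + 1) * j + 1 ∨ x + 1 = (e + 1) * j)})
      J.succ_pos (by omega) (by simp only [Nat.succ_eq_add_one]; omega) (pairCount_mono J) ih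
    obtain ⟨F, hF, hm⟩ := exists_cover_insert (p := (e + 1) * (J + 1) + 1) (D := e)
      J.succ_pos (by omega) (by simp only [Nat.succ_eq_add_one]; omega)
      (addPart_mono (pairCount_mono J) _) step₁ n
    refine ⟨F, hF, fun m hx hs => hm m (fun x hxm => ?_) hs⟩
    obtain ⟨j, h0, hj, h⟩ := hx x hxm
    rcases hj.lt_or_eq with hlt | rfl
    · exact .inr (.inr ⟨j, h0, by omega, h⟩)
    · rcases h with h | h
      · exact .inl h
      · exact .inr (.inl (by omega))

theorem Nat.Partition.eq_of_filter_ne_one_eq {n : ℕ} {p q : n.Partition}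
    (h : p.parts.filter (· ≠ 1) = q.parts.filter (· ≠ 1)) : p = q := by
  have key (p : n.Partition) : p.parts =
      Multiset.replicate (n - (p.parts.filter (· ≠ 1)).sum) 1 + p.parts.filter (· ≠ 1) := by
    have hsplit := Multiset.filter_add_not (· = 1) p.parts
    rw [Multiset.filter_eq'] at hsplit
    have hsum := congrArg Multiset.sum hsplit
    rw [p.parts_sum, Multiset.sum_add, Multiset.sum_replicate, smul_eq_mul, mul_one] at hsum
    rw [← Nat.eq_sub_of_add_eq hsum]
    exact hsplit.symm
  ext1
  rw [key p, key q, h]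

theorem congMinusCount_le_pairCount {d J n : ℕ} (hd : 3 ≤ d) (hJ : n / (d - 1) ≤ J) :
    congMinusCount (d - 3) 1 n ≤ pairCount J (n / (d - 1)) := by
  obtain ⟨F, hF, hm⟩ := exists_cover d J n (by omega)
  refine le_trans ?_ hF
  rw [congMinusCount, Nat.sub_add_cancel hd, ← Nat.card_eq_finsetCard F]
  refine Nat.card_le_card_of_injective
    (fun p => ⟨p.1.parts.filter (· ≠ 1), hm _ (fun x hx => ?_) ?_⟩) fun p q hpq =>
      Subtype.ext (Nat.Partition.eq_of_filter_ne_one_eq (congrArg Subtype.val hpq))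
  · obtain ⟨hxp, hx1⟩ := Multiset.mem_filter.1 hx
    have hx0 : 0 < x := p.1.parts_pos hxp
    have hxn : x ≤ n := p.1.parts_sum ▸ Multiset.le_sum_of_mem hxp
    have hle (j : ℕ) (hj : 0 < j) (hjx : d * j ≤ x + 1) : j ≤ J := by
      refine le_trans ((Nat.le_div_iff_mul_le (by omega)).2 ?_) hJ
      obtain ⟨e, rfl⟩ : ∃ e, d = e + 1 := ⟨d - 1, by omega⟩
      rw [add_one_mul, mul_comm] at hjx
      rw [Nat.add_sub_cancel]
      omega
    rcases p.2.1 x hxp with h | h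
    · obtain ⟨j, hj⟩ := (Nat.modEq_iff_dvd' hx0).1 h.symm
      have hj0 : 0 < j := Nat.pos_of_ne_zero fun h0 => by simp [h0] at hj; omega
      exact ⟨j, hj0, hle j hj0 (by omega), .inl (by omega)⟩
    · obtain ⟨j, hj⟩ := (Nat.modEq_zero_iff_dvd).1 h
      have hj0 : 0 < j := Nat.pos_of_ne_zero fun h0 => by simp [h0] at hj
      exact ⟨j, hj0, hle j hj0 (by omega), .inr hj⟩
  · have h := congrArg Multiset.sum (Multiset.filter_add_not (· ≠ 1) p.1.parts)
    rw [Multiset.sum_add, p.1.parts_sum] at h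
    omega

/-! ### A bound for the generating function -/

theorem addPart_mul_pow_le {f : ℕ → ℕ} {x C : ℝ} {j : ℕ} (hj : 0 < j) (hx0 : 0 ≤ x) (hx1 : x < 1)
    (hf : ∀ N, f N * x ^ N ≤ C) (N : ℕ) : addPart j f N * x ^ N ≤ C * (1 - x ^ j)⁻¹ := by
  have hC : 0 ≤ C := le_trans (by positivity) (hf 0)
  have hxj : 0 < 1 - x ^ j := sub_pos.2 (pow_lt_one₀ hx0 hx1 hj.ne')
  rw [← div_eq_mul_inv, le_div_iff₀ hxj]
  induction N using Nat.strong_induction_on with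
  | _ N ih =>
    rcases lt_or_ge N j with h | h
    · rw [addPart_of_lt f h]
      refine (mul_le_of_le_one_right (by positivity) ?_).trans (hf N)
      linarith [pow_nonneg hx0 j]
    · have hpow : x ^ N = x ^ (N - j) * x ^ j := by rw [← pow_add, Nat.sub_add_cancel h]
      have h1 := mul_le_mul_of_nonneg_right (ih (N - j) (by omega)) (pow_nonneg hx0 j)
      have h2 := mul_le_mul_of_nonneg_right (hf N) hxj.le
      rw [addPart_of_le f hj h]
      push_cast
      calc ((f N : ℝ) + addPart j f (N - j)) * x ^ N * (1 - x ^ j)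
          = f N * x ^ N * (1 - x ^ j)
            + addPart j f (N - j) * x ^ (N - j) * (1 - x ^ j) * x ^ j := by rw [hpow]; ring
        _ ≤ C * (1 - x ^ j) + C * x ^ j := add_le_add h2 h1
        _ = C := by ring

theorem pairCount_mul_pow_le {x : ℝ} (hx0 : 0 ≤ x) (hx1 : x < 1) (J N : ℕ) :
    pairCount J N * x ^ N ≤ (∏ j ∈ range J, (1 - x ^ (j + 1))⁻¹) ^ 2 := by
  induction J generalizing N with
  | zero => simpa [pairCount] using pow_le_one₀ hx0 hx1.le
  | succ J ih =>
    rw [prod_range_succ, mul_pow, sq (1 - x ^ (J + 1))⁻¹, ← mul_assoc]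
    exact addPart_mul_pow_le J.succ_pos hx0 hx1 (addPart_mul_pow_le J.succ_pos hx0 hx1 ih) N

theorem pow_div_one_sub_pow_le {x : ℝ} (hx0 : 0 ≤ x) (hx1 : x < 1) (m : ℕ) :
    x ^ (m + 1) / (1 - x ^ (m + 1)) ≤ x / (1 - x) / (m + 1) := by
  have hx : 0 < 1 - x := sub_pos.2 hx1
  have hxm : 0 < 1 - x ^ (m + 1) := sub_pos.2 (pow_lt_one₀ hx0 hx1 m.succ_ne_zero)
  have hgeom : (m + 1) * x ^ m ≤ ∑ i ∈ range (m + 1), x ^ i := by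
    have := card_nsmul_le_sum (range (m + 1)) (fun i => x ^ i) (x ^ m) fun i hi =>
      pow_le_pow_of_le_one hx0 hx1.le (by rw [mem_range] at hi; omega)
    simpa using this
  have hsum : (∑ i ∈ range (m + 1), x ^ i) * (1 - x) = 1 - x ^ (m + 1) := geom_sum_mul_neg x _
  rw [div_div, div_le_div_iff₀ hxm (by positivity), ← hsum, pow_succ]
  nlinarith [mul_le_mul_of_nonneg_left hgeom (mul_nonneg hx0 hx.le)]

theorem sum_pow_le {y : ℝ} (hy0 : 0 ≤ y) (hy1 : y < 1) (J : ℕ) :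
    ∑ j ∈ range J, y ^ (j + 1) ≤ y / (1 - y) := by
  have hy : 0 < 1 - y := sub_pos.2 hy1
  rw [le_div_iff₀ hy]
  simp only [pow_succ]
  rw [← sum_mul, mul_right_comm, geom_sum_mul_neg]
  nlinarith [pow_nonneg hy0 J]

theorem prod_inv_one_sub_pow_le {x : ℝ} (hx0 : 0 ≤ x) (hx1 : x < 1) (J : ℕ) :
    ∏ j ∈ range J, (1 - x ^ (j + 1))⁻¹ ≤ Real.exp (5 / 3 * (x / (1 - x))) := by
  have hlt (j : ℕ) : x ^ (j + 1) < 1 := pow_lt_one₀ hx0 hx1 j.succ_ne_zero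
  have hpos (j : ℕ) : 0 < (1 - x ^ (j + 1))⁻¹ := inv_pos.2 (sub_pos.2 (hlt j))
  have hx : 0 < 1 - x := sub_pos.2 hx1
  rw [← Real.log_le_iff_le_exp (prod_pos fun j _ => hpos j), Real.log_prod fun j _ => (hpos j).ne']
  have hlog : HasSum (fun m : ℕ => ∑ j ∈ range J, (x ^ (j + 1)) ^ (m + 1) / ((m : ℝ) + 1))
      (∑ j ∈ range J, Real.log (1 - x ^ (j + 1))⁻¹) := by
    refine hasSum_sum fun j _ => ?_
    rw [Real.log_inv]
    exact Real.hasSum_pow_div_log_of_abs_lt_one (by rw [abs_of_nonneg (by positivity)]; exact hlt j)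
  have hzeta : HasSum (fun m : ℕ => x / (1 - x) * (1 / ((m : ℝ) + 1) ^ 2))
      (x / (1 - x) * (Real.pi ^ 2 / 6)) := by
    refine HasSum.mul_left _ ?_
    have := (hasSum_nat_add_iff' 1).2 hasSum_zeta_two
    simpa using this
  refine (hasSum_le (fun m => ?_) hlog hzeta).trans ?_
  · calc ∑ j ∈ range J, (x ^ (j + 1)) ^ (m + 1) / ((m : ℝ) + 1)
        = (∑ j ∈ range J, (x ^ (m + 1)) ^ (j + 1)) / ((m : ℝ) + 1) := by
          rw [sum_div]
          refine sum_congr rfl fun j _ => ?_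
          rw [← pow_mul, ← pow_mul, mul_comm]
      _ ≤ x / (1 - x) / (m + 1) / ((m : ℝ) + 1) := by
          gcongr
          exact (sum_pow_le (by positivity) (hlt m) J).trans (pow_div_one_sub_pow_le hx0 hx1 m)
      _ = x / (1 - x) * (1 / ((m : ℝ) + 1) ^ 2) := by field_simp
  · have hpi : Real.pi ^ 2 / 6 ≤ 5 / 3 := by nlinarith [Real.pi_lt_d2, Real.pi_pos]
    rw [mul_comm]
    gcongr

theorem exp_eleven_thirds_le : Real.exp (11 / 3) ≤ 40 := by
  have h : Real.exp (11 / 3) ^ 3 ≤ 40 ^ 3 := by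
    rw [← Real.exp_nat_mul]
    have : ((3 : ℕ) : ℝ) * (11 / 3) = (11 : ℕ) * 1 := by norm_num
    rw [this, Real.exp_nat_mul]
    calc Real.exp 1 ^ 11 ≤ 2.7182818286 ^ 11 := by gcongr; exact Real.exp_one_lt_d9.le
      _ ≤ 40 ^ 3 := by norm_num
  exact le_of_pow_le_pow_left₀ (by norm_num) (by norm_num) h

theorem pairCount_le {k N : ℕ} (J : ℕ) (hN : N ≤ (k + 1) ^ 2) :
    pairCount J N ≤ 40 ^ (k + 1) := by
  have hk : (0 : ℝ) < k + 1 := by positivity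
  set x : ℝ := (k + 1) / (k + 3) with hx
  have hx0 : 0 < x := by positivity
  have hx1 : x < 1 := by rw [hx, div_lt_one (by positivity)]; linarith
  have hodds : x / (1 - x) = (k + 1) / 2 := by
    rw [hx]
    field_simp
    ring
  have hmain := (pairCount_mul_pow_le hx0.le hx1 J N).trans
    (pow_le_pow_left₀ (prod_nonneg fun j _ => inv_nonneg.2
      (sub_nonneg.2 (pow_le_one₀ hx0.le hx1.le))) (prod_inv_one_sub_pow_le hx0.le hx1 J) 2)
  rw [hodds, ← Real.exp_nat_mul] at hmain
  have hinv : x⁻¹ ≤ Real.exp (2 / (k + 1)) := by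
    refine le_trans (le_of_eq ?_) (Real.add_one_le_exp _)
    rw [hx]
    field_simp
    ring
  have hpow : (x ^ N)⁻¹ ≤ Real.exp (2 * (k + 1)) := by
    rw [← inv_pow]
    refine (pow_le_pow_left₀ (by positivity) hinv N).trans ?_
    rw [← Real.exp_nat_mul, Real.exp_le_exp, ← mul_div_assoc, div_le_iff₀ hk]
    have : (N : ℝ) ≤ (k + 1) ^ 2 := by exact_mod_cast hN
    nlinarith
  have : (pairCount J N : ℝ) ≤ 40 ^ (k + 1) := by
    calc (pairCount J N : ℝ) = pairCount J N * x ^ N * (x ^ N)⁻¹ := by field_simp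
      _ ≤ Real.exp ((2 : ℕ) * (5 / 3 * ((k + 1) / 2))) * Real.exp (2 * (k + 1)) := by gcongr
      _ = Real.exp (11 / 3) ^ (k + 1) := by
          rw [← Real.exp_add, ← Real.exp_nat_mul]
          push_cast
          ring_nf
      _ ≤ 40 ^ (k + 1) := by gcongr; exact exp_eleven_thirds_le
  exact_mod_cast this

theorem factorial_mul_le {k : ℕ} (hk : 13 ≤ k) :
    (2 ^ (k - 1) * (k.factorial * (k - 1).factorial * 40 ^ (k + 1)) : ℕ) ≤
      (29 * (k * (k + 1))) ^ (k - 1) := by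
  induction k, hk using Nat.le_induction with
  | base => decide +kernel
  | succ k hk ih =>
    obtain ⟨j, rfl⟩ : ∃ j, k = j + 1 := ⟨k - 1, by omega⟩
    simp only [Nat.add_sub_cancel] at ih ⊢
    have hbern : 3 * (j + 1) ^ (j + 1) ≤ (j + 3) ^ (j + 1) := by
      have h := one_add_mul_le_pow (a := (2 : ℝ) / (j + 1))
        (by have : (0 : ℝ) ≤ 2 / (j + 1) := by positivity
            linarith) (j + 1)
      have hj : (0 : ℝ) < j + 1 := by positivity
      have h3 : (1 : ℝ) + 2 / (j + 1) = (j + 3) / (j + 1) := by field_simp; ring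
      rw [h3, div_pow, le_div_iff₀ (by positivity)] at h
      push_cast at h
      rw [mul_div_cancel₀ _ hj.ne'] at h
      have : (3 : ℝ) * (j + 1) ^ (j + 1) ≤ (j + 3) ^ (j + 1) := by linarith
      exact_mod_cast this
    rw [Nat.factorial_succ (j + 1), Nat.factorial_succ j] at *
    calc 2 ^ (j + 1) * ((j + 1 + 1) * ((j + 1) * j.factorial) * ((j + 1) * j.factorial)
          * 40 ^ (j + 1 + 1 + 1))
        = (2 ^ j * ((j + 1) * j.factorial * j.factorial * 40 ^ (j + 1 + 1)))
          * (80 * ((j + 1 + 1) * (j + 1))) := by ring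
      _ ≤ (29 * ((j + 1) * (j + 1 + 1))) ^ j * (87 * ((j + 1 + 1) * (j + 1))) := by
          gcongr
          norm_num
      _ = 29 ^ (j + 1) * (j + 2) ^ (j + 1) * (3 * (j + 1) ^ (j + 1)) := by
          rw [mul_pow, mul_pow]
          ring
      _ ≤ 29 ^ (j + 1) * (j + 2) ^ (j + 1) * (j + 3) ^ (j + 1) := by gcongr
      _ = (29 * ((j + 1 + 1) * (j + 1 + 1 + 1))) ^ (j + 1) := by
          rw [mul_pow, mul_pow]
          ring

theorem pairCount_mul_prod_le (s J N : ℕ) :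
    pairCount J N * (s ^ N * (∏ j ∈ range J, ((s + 1) ^ (j + 1) - s ^ (j + 1))) ^ 2) ≤
      (s + 1) ^ N * (∏ j ∈ range J, (s + 1) ^ (j + 1)) ^ 2 := by
  have hlt (j : ℕ) : s ^ (j + 1) < (s + 1) ^ (j + 1) :=
    Nat.pow_lt_pow_left s.lt_succ_self j.succ_ne_zero
  have hpos : (0 : ℝ) < ∏ j ∈ range J, (((s : ℝ) + 1) ^ (j + 1) - (s : ℝ) ^ (j + 1)) :=
    prod_pos fun j _ => sub_pos.2 (by exact_mod_cast hlt j)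
  have hx1 : (s : ℝ) / (s + 1) < 1 := by rw [div_lt_one (by positivity)]; linarith
  have h := pairCount_mul_pow_le (by positivity) hx1 J N
  have hfactor (j : ℕ) : (1 - ((s : ℝ) / (s + 1)) ^ (j + 1))⁻¹ =
      ((s : ℝ) + 1) ^ (j + 1) / (((s : ℝ) + 1) ^ (j + 1) - (s : ℝ) ^ (j + 1)) := by
    rw [div_pow, one_sub_div (by positivity), inv_div]
  simp only [hfactor] at h
  rw [prod_div_distrib, div_pow, div_pow, ← mul_div_assoc,
    div_le_div_iff₀ (by positivity) (by positivity)] at h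
  rify
  rw [prod_congr rfl fun j _ => Nat.cast_sub (hlt j).le]
  push_cast
  calc _ = _ := (mul_assoc _ _ _).symm
    _ ≤ _ := h
    _ = _ := mul_comm _ _

/-! ### Comparison of the bounds -/

theorem pairCount_le_of_le_ten : ∀ m < 4, ∀ N < 11, 2 ≤ m → m ^ 2 ≤ N → N < (m + 1) ^ 2 →
    (m + 1).factorial * m.factorial * pairCount N N ≤
      (30 * N - 31 * (m * (m + 1) / 2) - (m + 1)) ^ m := by
  decide +kernel

theorem factorial_mul_prod_le : ∀ m < 13, ∀ N < (m + 1) ^ 2, m ^ 2 ≤ N → 11 ≤ N →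
    (m + 1).factorial * m.factorial * (((m + 1) / 2 + 1) ^ N *
      (∏ j ∈ range N, ((m + 1) / 2 + 1) ^ (j + 1)) ^ 2) ≤
      (30 * N - 31 * (m * (m + 1) / 2) - (m + 1)) ^ m * (((m + 1) / 2) ^ N *
        (∏ j ∈ range N, (((m + 1) / 2 + 1) ^ (j + 1) - ((m + 1) / 2) ^ (j + 1))) ^ 2) := by
  decide +kernel

theorem two_mul_triangle (m : ℕ) : 2 * (m * (m + 1) / 2) = m * (m + 1) :=
  Nat.mul_div_cancel' (Nat.even_mul_succ_self m).two_dvd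

theorem exists_pairCount_le {N : ℕ} (hN : 4 ≤ N) :
    ∃ m, m * (m + 1) / 2 ≤ N ∧ 31 * (m * (m + 1) / 2) + (m + 1) ≤ 30 * N ∧
      (m + 1).factorial * m.factorial * pairCount N N ≤
        (30 * N - 31 * (m * (m + 1) / 2) - (m + 1)) ^ m := by
  obtain ⟨k, hk, hkN, hNk⟩ : ∃ k, 2 ≤ k ∧ k ^ 2 ≤ N ∧ N < (k + 1) ^ 2 :=
    ⟨N.sqrt, Nat.le_sqrt'.2 hN, Nat.sqrt_le' N, Nat.lt_succ_sqrt' N⟩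
  rcases lt_or_ge k 13 with hk13 | hk13
  · have htri := two_mul_triangle k
    refine ⟨k, by nlinarith, by nlinarith, ?_⟩
    rcases lt_or_ge N 11 with hN11 | hN11
    · exact pairCount_le_of_le_ten k (by nlinarith) N hN11 hk hkN hNk
    · have h := Nat.mul_le_mul_left ((k + 1).factorial * k.factorial)
        (pairCount_mul_prod_le ((k + 1) / 2) N N)
      have hpos : 0 < ((k + 1) / 2) ^ N *
          (∏ j ∈ range N, (((k + 1) / 2 + 1) ^ (j + 1) - ((k + 1) / 2) ^ (j + 1))) ^ 2 := by
        have hk2 : 0 < (k + 1) / 2 := by omega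
        refine Nat.mul_pos (pow_pos hk2 _) (pow_pos (prod_pos fun j _ => Nat.sub_pos_of_lt ?_) _)
        exact Nat.pow_lt_pow_left (Nat.lt_succ_self _) j.succ_ne_zero
      refine Nat.le_of_mul_le_mul_right ?_ hpos
      rw [mul_assoc]
      exact h.trans (factorial_mul_prod_le k hk13 N hNk hkN hN11)
  · obtain ⟨m, rfl⟩ : ∃ m, k = m + 1 := ⟨k - 1, by omega⟩
    have htri := two_mul_triangle m
    refine ⟨m, by nlinarith, by nlinarith, ?_⟩
    have hM : 29 * ((m + 1) * (m + 1 + 1)) ≤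
        2 * (30 * N - 31 * (m * (m + 1) / 2) - (m + 1)) := by
      have : 29 * ((m + 1) * (m + 1 + 1)) + 62 * (m * (m + 1) / 2) + 2 * (m + 1) ≤ 60 * N := by
        nlinarith
      omega
    refine Nat.le_of_mul_le_mul_left ?_ (pow_pos two_pos m)
    rw [← mul_pow]
    refine le_trans ?_ (Nat.pow_le_pow_left hM m)
    refine le_trans ?_ (factorial_mul_le hk13)
    rw [Nat.add_sub_cancel]
    gcongr
    exact pairCount_le N hNk.le

/-! ### A lower bound for partitions with gaps -/

theorem add_pow_succ_le (a c k : ℕ) :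
    (a + c) ^ (k + 1) ≤ a ^ (k + 1) + (k + 1) * c * (a + c) ^ k := by
  induction k with
  | zero => simp
  | succ k ih =>
    calc (a + c) ^ (k + 1 + 1) = a * (a + c) ^ (k + 1) + c * (a + c) ^ (k + 1) := by ring
      _ ≤ a * (a ^ (k + 1) + (k + 1) * c * (a + c) ^ k) + c * (a + c) ^ (k + 1) := by gcongr
      _ = a ^ (k + 1 + 1) + (k + 1) * c * (a * (a + c) ^ k) + c * (a + c) ^ (k + 1) := by ring
      _ ≤ a ^ (k + 1 + 1) + (k + 1) * c * ((a + c) * (a + c) ^ k) + c * (a + c) ^ (k + 1) := by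
          gcongr
          exact Nat.le_add_right a c
      _ = a ^ (k + 1 + 1) + (k + 1 + 1) * c * (a + c) ^ (k + 1) := by ring

theorem pow_succ_le_of_le {m M : ℕ} (h : m + 2 ≤ M) :
    M ^ (m + 1) ≤ (m + 2) * (m + 1) * M ^ m + (M - (m + 2)) ^ (m + 1) := by
  obtain ⟨a, rfl⟩ := Nat.exists_eq_add_of_le' h
  rw [Nat.add_sub_cancel]
  linarith [add_pow_succ_le a (m + 2) m]

/-- Lists of `m + 1` positive entries with gaps at least `d`, whose sum exceeds the least possible
one by `M`. -/
def IsGapList (d m M : ℕ) (l : List ℕ) : Prop :=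
  l.length = m + 1 ∧ l.sum = M + (m + 1) + d * (m * (m + 1) / 2) ∧
    l.IsChain (fun x y => x + d ≤ y) ∧ ∀ x ∈ l, 1 ≤ x

theorem List.sum_map_add_const (l : List ℕ) (c : ℕ) :
    (l.map (· + c)).sum = l.sum + l.length * c := by
  rw [List.sum_map_add]
  simp

theorem List.IsChain.map_add_const {d : ℕ} {l : List ℕ}
    (h : l.IsChain (fun x y => x + d ≤ y)) (c : ℕ) :
    (l.map (· + c)).IsChain (fun x y => x + d ≤ y) := by
  rw [List.isChain_map]
  exact h.imp fun x y hxy => by omega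

theorem IsGapList.cons {d m M : ℕ} {l : List ℕ} (h : IsGapList d m M l) :
    IsGapList d (m + 1) M (1 :: l.map (· + d)) := by
  obtain ⟨hlen, hsum, hchain, hpos⟩ := h
  refine ⟨by simp [hlen], ?_, List.isChain_cons.2 ⟨fun y hy => ?_, hchain.map_add_const d⟩, ?_⟩
  · have htri : (m + 1) * (m + 1 + 1) / 2 = m * (m + 1) / 2 + (m + 1) := by
      have h1 := two_mul_triangle m
      have h2 := two_mul_triangle (m + 1)
      nlinarith
    rw [List.sum_cons, List.sum_map_add_const, hlen, hsum, htri]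
    ring
  · have hy' := List.mem_of_mem_head? hy
    obtain ⟨x, hx, rfl⟩ := List.mem_map.1 hy'
    have := hpos x hx
    omega
  · intro x hx
    rcases List.mem_cons.1 hx with rfl | hx
    · exact le_rfl
    · obtain ⟨y, hy, rfl⟩ := List.mem_map.1 hx
      exact Nat.le_add_right_of_le (hpos y hy)

theorem IsGapList.map_succ {d m M : ℕ} {l : List ℕ} (h : IsGapList d m M l) :
    IsGapList d m (M + (m + 1)) (l.map (· + 1)) := by
  obtain ⟨hlen, hsum, hchain, hpos⟩ := h
  refine ⟨by simp [hlen], ?_, hchain.map_add_const 1, by simp⟩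
  rw [List.sum_map_add_const, hlen, hsum]
  ring

theorem exists_gapLists (d m M : ℕ) : ∃ F : Finset (List ℕ),
    M ^ m ≤ (m + 1).factorial * m.factorial * F.card ∧ ∀ l ∈ F, IsGapList d m M l := by
  have hinj (c : ℕ) : Function.Injective (List.map (· + c)) :=
    List.map_injective_iff.2 (add_left_injective c)
  induction m generalizing M with
  | zero => exact ⟨{[M + 1]}, by simp, by simp [IsGapList]⟩
  | succ m ihm =>
    have hfac : (m + 1 + 1).factorial * (m + 1).factorial =
        (m + 2) * (m + 1) * ((m + 1).factorial * m.factorial) := by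
      rw [Nat.factorial_succ (m + 1), Nat.factorial_succ m]
      ring
    induction M using Nat.strong_induction_on with
    | _ M ihM =>
      obtain ⟨F₁, hF₁, hl₁⟩ := ihm M
      have hcard₁ : (F₁.image fun l => 1 :: l.map (· + d)).card = F₁.card :=
        card_image_of_injective _ fun l l' h => hinj d (List.cons_injective h)
      have hgap₁ : ∀ l ∈ F₁.image fun l => 1 :: l.map (· + d), IsGapList d (m + 1) M l := by
        intro l hl
        obtain ⟨l₁, hmem, rfl⟩ := mem_image.1 hl
        exact (hl₁ l₁ hmem).cons
      rcases lt_or_ge M (m + 2) with hM | hM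
      · refine ⟨_, ?_, hgap₁⟩
        rw [hcard₁, hfac, mul_assoc, pow_succ']
        gcongr
        nlinarith
      · obtain ⟨F₂, hF₂, hl₂⟩ := ihM (M - (m + 2)) (by omega)
        have hcard₂ : (F₂.image (List.map (· + 1))).card = F₂.card :=
          card_image_of_injective _ (hinj 1)
        refine ⟨F₁.image (fun l => 1 :: l.map (· + d)) ∪ F₂.image (List.map (· + 1)), ?_, ?_⟩
        · rw [card_union_of_disjoint, hcard₁, hcard₂]
          · calc M ^ (m + 1) ≤ (m + 2) * (m + 1) * M ^ m + (M - (m + 2)) ^ (m + 1) :=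
                  pow_succ_le_of_le hM
              _ ≤ (m + 2) * (m + 1) * ((m + 1).factorial * m.factorial * F₁.card) +
                  (m + 1 + 1).factorial * (m + 1).factorial * F₂.card := by gcongr
              _ = _ := by rw [hfac]; ring
          · rw [disjoint_left]
            intro l h₁ h₂
            obtain ⟨l₁, -, rfl⟩ := mem_image.1 h₁
            obtain ⟨l₂, hl, heq⟩ := mem_image.1 h₂
            have hmem : 1 ∈ l₂.map (· + 1) := heq ▸ List.mem_cons_self
            obtain ⟨x, hx, hx1⟩ := List.mem_map.1 hmem
            have := (hl₂ l₂ hl).2.2.2 x hx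
            omega
        · intro l hl
          rcases mem_union.1 hl with h | h
          · exact hgap₁ l h
          · obtain ⟨l₂, hmem, rfl⟩ := mem_image.1 h
            have := (hl₂ l₂ hmem).map_succ
            rwa [Nat.sub_add_cancel hM] at this

theorem sort_coe_of_isChain {d : ℕ} {l : List ℕ} (h : l.IsChain (fun x y => x + d ≤ y)) :
    (l : Multiset ℕ).sort (· ≤ ·) = l := by
  rw [Multiset.coe_sort]
  refine List.mergeSort_eq_self _ (List.isChain_iff_pairwise.1 ?_)
  exact h.imp fun x y hxy => by omega

theorem card_le_gapCount {d m M : ℕ} {F : Finset (List ℕ)} (hF : ∀ l ∈ F, IsGapList d m M l) :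
    F.card ≤ gapCount d 1 (M + (m + 1) + d * (m * (m + 1) / 2)) := by
  rw [gapCount, ← Nat.card_eq_finsetCard F]
  refine Nat.card_le_card_of_injective (fun l => ⟨⟨(l.1 : Multiset ℕ), fun {x} hx => ?_, ?_⟩,
    fun x hx => (hF l.1 l.2).2.2.2 x (by simpa using hx), ?_⟩) fun l l' h => Subtype.ext ?_
  · exact (hF l.1 l.2).2.2.2 x (by simpa using hx)
  · rw [Multiset.sum_coe]
    exact (hF l.1 l.2).2.1
  · change List.IsChain _ ((l.1 : Multiset ℕ).sort (· ≤ ·))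
    rw [sort_coe_of_isChain (hF l.1 l.2).2.2.1]
    exact (hF l.1 l.2).2.2.1
  · have hparts : (l.1 : Multiset ℕ) = (l'.1 : Multiset ℕ) :=
      congrArg (fun p => p.1.parts) h
    rw [← sort_coe_of_isChain (hF l.1 l.2).2.2.1, hparts,
      sort_coe_of_isChain (hF l'.1 l'.2).2.2.1]

theorem pow_le_gapCount (d m M : ℕ) :
    M ^ m ≤ (m + 1).factorial * m.factorial *
      gapCount d 1 (M + (m + 1) + d * (m * (m + 1) / 2)) := by
  obtain ⟨F, hF, hl⟩ := exists_gapLists d m M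
  exact hF.trans (Nat.mul_le_mul_left _ (card_le_gapCount hl))

theorem congMinusCount_le_gapCount {d n : ℕ} (hd : 31 ≤ d) (hn : 4 * (d - 1) ≤ n) :
    congMinusCount (d - 3) 1 n ≤ gapCount d 1 n := by
  set N := n / (d - 1) with hNdef
  have hN : 4 ≤ N := (Nat.le_div_iff_mul_le (by omega)).2 hn
  have hNn : N * (d - 1) ≤ n := Nat.div_mul_le_self n (d - 1)
  obtain ⟨m, hmN, hpos, hm⟩ := exists_pairCount_le hN
  refine (congMinusCount_le_pairCount (by omega) le_rfl).trans ?_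
  rw [← hNdef]
  obtain ⟨e, rfl⟩ := Nat.exists_eq_add_of_le' hd
  rw [show e + 31 - 1 = e + 30 by omega] at hNn
  have hM : 30 * N - 31 * (m * (m + 1) / 2) - (m + 1) ≤
      n - (e + 31) * (m * (m + 1) / 2) - (m + 1) ∧
      (e + 31) * (m * (m + 1) / 2) + (m + 1) ≤ n := by
    generalize m * (m + 1) / 2 = T at *
    have h1 : e * T ≤ e * N := Nat.mul_le_mul_left e hmN
    have h2 : N * (e + 30) = e * N + 30 * N := by ring
    have h3 : (e + 31) * T = e * T + 31 * T := by ring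
    omega
  have hgap := pow_le_gapCount (e + 31) m (n - (e + 31) * (m * (m + 1) / 2) - (m + 1))
  rw [show n - (e + 31) * (m * (m + 1) / 2) - (m + 1) + (m + 1) +
    (e + 31) * (m * (m + 1) / 2) = n by omega] at hgap
  refine Nat.le_of_mul_le_mul_left (hm.trans ((Nat.pow_le_pow_left hM.1 m).trans hgap)) ?_
  positivity

theorem stmt9 (d n r : ℕ) (hd : d = 31 ∨ 63 ≤ d) (hr : 1 ≤ r)
    (hr2 : 2 ^ r - 1 ≤ d) (hrmax : ∀ s, 1 ≤ s → 2 ^ s - 1 ≤ d → s ≤ r)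
    (hn : 4 * d + 2 ^ r ≤ n) :
    congMinusCount (d - 3) 1 n ≤ gapCount d 1 n := by
  have h4 : 4 * d ≤ n := (Nat.le_add_right _ _).trans hn
  exact congMinusCount_le_gapCount (by omega) (by omega)
end

section
/- Let a ≥ 5 and let d be a positive integer with d + h_d^{(a)} ≥ a·2^{a+3} − a. Let U denote the set of positive integers congruent modulo 2(d + h_d^{(a)}) either to a or to (d + h_d^{(a)}) + 2^j·a for some 1 ≤ j ≤ a−1. Then for all n ≥ 1, ρ(U; n + h_n^{(a)}) ≥ Q_d^{(a,-,-)}(n). -/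
theorem dvd_add_negRes {a : ℕ} (n : ℕ) (ha : 0 < a) : a ∣ n + negRes n a := by
  rw [Nat.dvd_iff_mod_eq_zero, negRes, Nat.add_mod_mod, ← Nat.mod_add_mod,
    Nat.add_sub_cancel' (Nat.mod_lt n ha).le, Nat.mod_self]

theorem negRes_lt {a : ℕ} (n : ℕ) (ha : 0 < a) : negRes n a < a := Nat.mod_lt _ ha

theorem Multiset.filter_ne_map_add_replicate (f : ℕ → ℕ) (y k : ℕ) (p : Multiset ℕ) :
    (p.map f + Multiset.replicate k y).filter (· ≠ y) = (p.filter (f · ≠ y)).map f := by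
  have h : (Multiset.replicate k y).filter (· ≠ y) = 0 :=
    Multiset.filter_eq_nil.2 fun b hb => by simp [Multiset.eq_of_mem_replicate hb]
  rw [Multiset.filter_add, Multiset.filter_map, h, add_zero]
  rfl

theorem Multiset.map_injOn {f : ℕ → ℕ} {S : Set ℕ} (hf : Set.InjOn f S) {p q : Multiset ℕ}
    (hp : ∀ x ∈ p, x ∈ S) (hq : ∀ x ∈ q, x ∈ S) (h : p.map f = q.map f) : p = q := by
  have key : ∀ r : Multiset ℕ, (∀ x ∈ r, x ∈ S) →
      (r.map f).map (Function.invFunOn f S) = r := fun r hr => by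
    rw [Multiset.map_map]
    exact (Multiset.map_congr rfl fun x hx => hf.leftInvOn_invFunOn (hr x hx)).trans
      (Multiset.map_id r)
  rw [← key p hp, ← key q hq, h]

theorem Multiset.eq_of_filter_eq_of_sum_eq {p q : Multiset ℕ} {P : ℕ → Prop} [DecidablePred P]
    {x₀ : ℕ} (hx₀ : 0 < x₀) (hp : ∀ x ∈ p, ¬ P x → x = x₀) (hq : ∀ x ∈ q, ¬ P x → x = x₀)
    (hpq : p.filter P = q.filter P) (hsum : p.sum = q.sum) : p = q := by
  have key : ∀ r : Multiset ℕ, (∀ x ∈ r, ¬ P x → x = x₀) →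
      r.filter P + Multiset.replicate (r.filter (¬ P ·)).card x₀ = r := fun r hr => by
    conv_rhs => rw [← Multiset.filter_add_not P r]
    congr 1
    refine (Multiset.eq_replicate.2 ⟨rfl, fun x hx => ?_⟩).symm
    exact hr x (Multiset.mem_filter.1 hx).1 (Multiset.mem_filter.1 hx).2
  have hp' := congrArg Multiset.sum (key p hp)
  have hq' := congrArg Multiset.sum (key q hq)
  rw [Multiset.sum_add, Multiset.sum_replicate, smul_eq_mul] at hp' hq'
  rw [hpq] at hp'
  have hcard : (p.filter (¬ P ·)).card = (q.filter (¬ P ·)).card :=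
    Nat.eq_of_mul_eq_mul_right hx₀ (by omega)
  rw [← key p hp, ← key q hq, hcard, hpq]

/-- If `T` contains distinct multiples `t i` of `a = t 0` with `t i ≤ s i`, then partitions into
parts `s i` are at most as numerous as partitions into parts from `T`, once the number partitioned
is rounded up to a multiple of `a`: replace each `s i` by `t i` and make up the difference with
copies of `a`. -/
theorem rhoCount_range_le (s t : ℕ → ℕ) (T : Set ℕ) (a n : ℕ) (hs : 0 < s 0) (ht : t 0 = a)
    (hinj : Function.Injective t) (hle : ∀ i, t i ≤ s i) (hdvd : ∀ i, a ∣ t i)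
    (hT : ∀ i, t i ∈ T) (hpos : ∀ x ∈ T, 0 < x) :
    rhoCount (Set.range s) n ≤ rhoCount T (n + negRes n a) := by
  set f : ℕ → ℕ := fun x => t (Function.invFun s x)
  have hg : ∀ x ∈ Set.range s, s (Function.invFun s x) = x := fun x hx => Function.invFun_eq hx
  have hfle : ∀ x ∈ Set.range s, f x ≤ x := fun x hx => (hle _).trans (hg x hx).le
  have hfinj : Set.InjOn f (Set.range s) := fun x hx y hy hxy => by
    rw [← hg x hx, ← hg y hy, hinj hxy]
  have hfa : ∀ x ∈ Set.range s, ¬ f x ≠ a → x = s 0 := fun x hx h => by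
    rw [← hg x hx, hinj ((not_not.1 h).trans ht.symm)]
  have haT : a ∈ T := ht ▸ hT 0
  let fill (p : n.Partition) : ℕ := (n + negRes n a - (p.parts.map f).sum) / a
  let image (p : n.Partition) : Multiset ℕ := p.parts.map f + Multiset.replicate (fill p) a
  have himage : ∀ p : n.Partition, ∀ x ∈ image p, x ∈ T := fun p x hx => by
    rcases Multiset.mem_add.1 hx with h | h
    · obtain ⟨y, -, rfl⟩ := Multiset.mem_map.1 h
      exact hT _
    · exact Multiset.eq_of_mem_replicate h ▸ haT
  have hsum : ∀ p : n.Partition, (∀ x ∈ p.parts, x ∈ Set.range s) →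
      (image p).sum = n + negRes n a := fun p hp => by
    have hle' : (p.parts.map f).sum ≤ n := by
      have := Multiset.sum_map_le_sum_map f id fun x hx => hfle x (hp x hx)
      rwa [Multiset.map_id, p.parts_sum] at this
    have hd : a ∣ n + negRes n a - (p.parts.map f).sum := by
      refine Nat.dvd_sub (dvd_add_negRes n (hpos a haT)) (Multiset.dvd_sum fun x hx => ?_)
      obtain ⟨y, -, rfl⟩ := Multiset.mem_map.1 hx
      exact hdvd _
    rw [Multiset.sum_add, Multiset.sum_replicate, smul_eq_mul, Nat.div_mul_cancel hd]
    omega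
  refine Nat.card_le_card_of_injective
    (fun p => ⟨⟨image p.1, fun {x} hx => hpos x (himage p.1 x hx), hsum p.1 p.2⟩, himage p.1⟩) ?_
  rintro ⟨p, hp⟩ ⟨q, hq⟩ hpq
  have himg : image p = image q := congrArg (fun r => r.1.parts) hpq
  have hfilter := congrArg (Multiset.filter (· ≠ a)) himg
  rw [Multiset.filter_ne_map_add_replicate, Multiset.filter_ne_map_add_replicate] at hfilter
  refine Subtype.ext (Nat.Partition.ext (Multiset.eq_of_filter_eq_of_sum_eq hs
    (fun x hx => hfa x (hp x hx)) (fun x hx => hfa x (hq x hx))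
    (Multiset.map_injOn hfinj (fun x hx => hp x (Multiset.mem_of_mem_filter hx))
      (fun x hx => hq x (Multiset.mem_of_mem_filter hx)) hfilter)
    (p.parts_sum.trans q.parts_sum.symm)))

/-- The integers congruent to `±a` modulo `M` and larger than `M`, in increasing order. -/
def pmSeq (M a i : ℕ) : ℕ :=
  if i % 2 = 0 then (i / 2 + 1) * M + a else (i / 2 + 2) * M - a

theorem two_mul_pmSeq_ge {M a : ℕ} (h : 2 * a ≤ M) (i : ℕ) : (i + 2) * M ≤ 2 * pmSeq M a i := by
  have hi := Nat.div_add_mod i 2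
  unfold pmSeq
  split_ifs with h0
  · have : (i + 2) * M = 2 * ((i / 2 + 1) * M) := by
      rw [show i + 2 = 2 * (i / 2 + 1) by omega, mul_assoc]
    omega
  · have : (i + 2) * M + M = 2 * ((i / 2 + 2) * M) := by
      rw [← Nat.succ_mul, ← mul_assoc]
      congr 1
      omega
    omega

theorem mem_range_pmSeq {M a x : ℕ} (haM : a < M) (hx : 0 < x)
    (h : x ≡ a [MOD M] ∨ x + a ≡ 0 [MOD M]) (hxa : x ≠ a) (hxM : x ≠ M - a) :
    x ∈ Set.range (pmSeq M a) := by
  rcases h with h | h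
  · have hmod : x % M = a := by rw [h, Nat.mod_eq_of_lt haM]
    have hdiv := Nat.div_add_mod x M
    rcases hk : x / M with _ | k
    · rw [hk] at hdiv
      omega
    · refine ⟨2 * k, ?_⟩
      rw [hk, hmod, mul_comm] at hdiv
      simpa [pmSeq] using hdiv
  · obtain ⟨k, hk⟩ := (Nat.modEq_zero_iff_dvd).1 h
    rcases k with _ | _ | k
    · omega
    · omega
    · refine ⟨2 * k + 1, ?_⟩
      have h1 : (2 * k + 1) % 2 = 1 := by omega
      have h2 : (2 * k + 1) / 2 = k := by omega
      rw [mul_comm] at hk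
      simp only [pmSeq, h1, h2, one_ne_zero, if_false]
      rw [show k + 2 = k + 1 + 1 from rfl, ← hk]
      omega

/-- The integers congruent modulo `2 * D` to `a` or to `D + 2 ^ j * a` with `1 ≤ j < a`, in
increasing order when `2 ^ (a - 1) * a < D`. -/
def powSeq (D a i : ℕ) : ℕ :=
  (2 * (i / a) + if i % a = 0 then 0 else 1) * D + 2 ^ (i % a) * a

theorem powSeq_injective {D a : ℕ} (ha : 0 < a) (hD : 2 ^ a * a < D) :
    Function.Injective (powSeq D a) := by
  have hlt : ∀ i, 2 ^ (i % a) * a < D := fun i =>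
    (Nat.mul_le_mul_right a (Nat.pow_le_pow_right two_pos (Nat.mod_lt i ha).le)).trans_lt hD
  intro i j h
  have hmod := congrArg (· % D) h
  simp only [powSeq, Nat.mul_add_mod_self_right, Nat.mod_eq_of_lt (hlt _)] at hmod
  have hij : i % a = j % a :=
    Nat.pow_right_injective le_rfl (Nat.eq_of_mul_eq_mul_right ha hmod)
  have hq : i / a = j / a := by
    simp only [powSeq, hij] at h
    have := Nat.eq_of_mul_eq_mul_right (by omega) (Nat.add_right_cancel h)
    omega
  rw [← Nat.div_add_mod i a, ← Nat.div_add_mod j a, hij, hq]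

theorem powSeq_modEq (D a i : ℕ) (ha : 0 < a) : powSeq D a i ≡ a [MOD 2 * D] ∨
    ∃ j, 1 ≤ j ∧ j ≤ a - 1 ∧ powSeq D a i ≡ D + 2 ^ j * a [MOD 2 * D] := by
  have hlt := Nat.mod_lt i ha
  by_cases h : i % a = 0
  · left
    simp only [powSeq, h, if_true, pow_zero, one_mul, add_zero]
    rw [mul_right_comm]
    simp [Nat.ModEq]
  · refine Or.inr ⟨i % a, by omega, by omega, ?_⟩
    simp only [powSeq, h, if_false]
    rw [add_mul, mul_right_comm, one_mul, add_assoc]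
    simp [Nat.ModEq]

theorem powSeq_le_pmSeq {D a d : ℕ} (ha : 5 ≤ a) (hDd : D ≤ d + a) (hd : 2 ^ a * a + 4 * a ≤ d)
    (i : ℕ) : powSeq D a i ≤ pmSeq (d + 3) a i := by
  have hs := two_mul_pmSeq_ge (M := d + 3) (a := a) (by omega) i
  suffices h : 2 * powSeq D a i ≤ (i + 2) * (d + 3) by omega
  have hi := Nat.div_add_mod i a
  have hlt := Nat.mod_lt i (show 0 < a by omega)
  unfold powSeq
  generalize i / a = k at *
  generalize i % a = j at *
  have hk : 5 * k ≤ a * k := Nat.mul_le_mul_right k ha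
  have had : 4 * a ≤ d := by omega
  have hkd : k * (4 * a) ≤ k * d := Nat.mul_le_mul_left k had
  split_ifs with hj
  · subst hj
    calc 2 * ((2 * k + 0) * D + 2 ^ 0 * a) ≤ 2 * ((2 * k + 0) * (d + a) + 2 ^ 0 * a) := by gcongr
      _ ≤ (5 * k + 2) * (d + 3) := by nlinarith
      _ ≤ (i + 2) * (d + 3) := by gcongr; omega
  · have hpow : 2 * (2 ^ j * a) ≤ 2 ^ a * a := by
      rw [← mul_assoc, ← pow_succ']
      exact Nat.mul_le_mul_right a (Nat.pow_le_pow_right two_pos hlt)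
    calc 2 * ((2 * k + 1) * D + 2 ^ j * a) ≤ 2 * ((2 * k + 1) * (d + a) + 2 ^ j * a) := by gcongr
      _ ≤ (5 * k + 1 + 2) * (d + 3) := by nlinarith
      _ ≤ (i + 2) * (d + 3) := by gcongr; omega

theorem congMinusMinusCount_le_rhoCount {d a : ℕ} (had : a < d + 3) (n : ℕ) :
    congMinusMinusCount d a n ≤ rhoCount (Set.range (pmSeq (d + 3) a)) n :=
  Nat.card_le_card_of_injective
    (fun p => ⟨p.1, fun x hx => mem_range_pmSeq had (p.1.parts_pos hx) (p.2.1 x hx)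
      (p.2.2.1 x hx) (p.2.2.2 x hx)⟩)
    fun _ _ h => Subtype.ext (congrArg (·.1) h)

theorem stmt12 (a d : ℕ) (ha : 5 ≤ a) (hd : 1 ≤ d)
    (hbig : a * 2 ^ (a + 3) - a ≤ d + negRes d a) (n : ℕ) (hn : 1 ≤ n) :
    congMinusMinusCount d a n ≤
      rhoCount {m : ℕ | 0 < m ∧ (m ≡ a [MOD 2 * (d + negRes d a)] ∨
        ∃ j, 1 ≤ j ∧ j ≤ a - 1 ∧
          m ≡ (d + negRes d a) + 2 ^ j * a [MOD 2 * (d + negRes d a)])}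
        (n + negRes n a) := by
  have hneg := negRes_lt d (show 0 < a by omega)
  have hdvd := dvd_add_negRes d (show 0 < a by omega)
  set D := d + negRes d a with hD
  have hpow : a * 2 ^ (a + 3) = 8 * (2 ^ a * a) := by ring
  have htwo : 32 * a ≤ 2 ^ a * a :=
    Nat.mul_le_mul_right a (Nat.pow_le_pow_right two_pos ha)
  refine (congMinusMinusCount_le_rhoCount (by omega) n).trans
    (rhoCount_range_le _ (powSeq D a) _ a n ?_ ?_ (powSeq_injective (by omega) (by omega))
      (powSeq_le_pmSeq ha (by omega) (by omega))
      (fun i => dvd_add (hdvd.mul_left _) (dvd_mul_left a _))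
      (fun i => ⟨?_, powSeq_modEq D a i (by omega)⟩) fun x hx => hx.1)
  · simp [pmSeq]
  · simp [powSeq]
  · exact Nat.add_pos_right _ (by positivity)
end
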